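/- Let E/F be a finite field extension, let O_{v_1}, …, O_{v_k} be finitely many valuation rings of F, and let R_1, …, R_k be subrings of E such that E is the field of fractions of each R_i and R_i ∩ F = O_{v_i} for each i. Set B = ⋂_{i=1}^k O_{v_i} and R = ⋂_{i=1}^k R_i, and let S = B \ {0}. Then E = S⁻¹R; that is, every x ∈ E can be written as x = r/b with r ∈ R and b ∈ B, b ≠ 0. -/

import Mathlib

/-- The sequence `P 0 = a`, `P (m + 1) = P m * (1 + P m)`. Its shifts `1 + P m` are pairwise
coprime polynomials in `a`. -/
def coprimeSeq {F : Type*} [Field F] (a : F) : ℕ → F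
  | 0 => a
  | m + 1 => coprimeSeq a m * (1 + coprimeSeq a m)

section Valuation

variable {F Γ : Type*} [Field F] [LinearOrderedCommGroupWithZero Γ] (v : Valuation F Γ) {a : F}

theorem le_valuation_coprimeSeq (ha : 1 < v a) (m : ℕ) : v a ≤ v (coprimeSeq a m) := by
  induction m with
  | zero => exact le_rfl
  | succ m ih =>
    have h1 : 1 < v (coprimeSeq a m) := ha.trans_le ih
    rw [coprimeSeq, map_mul, v.map_add_eq_of_lt_right (v.map_one.trans_lt h1)]
    exact ih.trans (le_mul_of_one_le_right' h1.le)

theorem valuation_one_add_le_one {x : F} (hx : v x ≤ 1) : v (1 + x) ≤ 1 :=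
  v.map_add_le v.map_one.le hx

theorem valuation_coprimeSeq_le_one (ha : v a ≤ 1) (m : ℕ) : v (coprimeSeq a m) ≤ 1 := by
  induction m with
  | zero => exact ha
  | succ m ih =>
    rw [coprimeSeq, map_mul]
    exact mul_le_one' ih (valuation_one_add_le_one v ih)

theorem valuation_coprimeSeq_lt_one (ha : v a ≤ 1) {m n : ℕ} (hmn : m < n)
    (hm : v (1 + coprimeSeq a m) < 1) : v (coprimeSeq a n) < 1 := by
  induction n, hmn using Nat.le_induction with
  | base =>
    rw [coprimeSeq, map_mul]
    exact (mul_le_of_le_one_left' (valuation_coprimeSeq_le_one v ha m)).trans_lt hm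
  | succ n _ ih =>
    rw [coprimeSeq, map_mul]
    exact (mul_le_of_le_one_right'
      (valuation_one_add_le_one v (valuation_coprimeSeq_le_one v ha n))).trans_lt ih

/-- For each valuation there is at most one `m` with `v (1 + P m) < max 1 (v a)`. -/
theorem not_lt_of_valuation_one_add_coprimeSeq_lt {m n : ℕ} (hmn : m < n)
    (hm : v (1 + coprimeSeq a m) < max 1 (v a)) :
    ¬ v (1 + coprimeSeq a n) < max 1 (v a) := by
  rcases le_or_gt (v a) 1 with ha | ha
  · rw [max_eq_left ha] at hm ⊢
    rw [v.map_one_add_of_lt (valuation_coprimeSeq_lt_one v ha hmn hm)]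
    exact lt_irrefl _
  · rw [max_eq_right ha.le, not_lt]
    have h := le_valuation_coprimeSeq v ha n
    rw [v.map_add_eq_of_lt_right (v.map_one.trans_lt (ha.trans_le h))]
    exact h

end Valuation

/-- A field is the fraction field of a finite intersection of its valuation rings. -/
theorem exists_mem_and_mul_mem_of_finite {F ι : Type*} [Field F] [Finite ι]
    (A : ι → ValuationSubring F) (a : F) :
    ∃ d : F, d ≠ 0 ∧ ∀ i, d ∈ A i ∧ d * a ∈ A i := by
  rcases isEmpty_or_nonempty ι with _ | ⟨⟨i₀⟩⟩
  · exact ⟨1, one_ne_zero, fun i => isEmptyElim i⟩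
  obtain ⟨m, hm⟩ : ∃ m, ∀ i, max 1 ((A i).valuation a) ≤
      (A i).valuation (1 + coprimeSeq a m) := by
    by_contra! h
    choose f hf using h
    refine not_injective_infinite_finite f fun m n hmn => ?_
    by_contra hne
    rcases lt_or_gt_of_ne hne with hlt | hlt
    · exact not_lt_of_valuation_one_add_coprimeSeq_lt _ hlt (hf m) (hmn ▸ hf n)
    · exact not_lt_of_valuation_one_add_coprimeSeq_lt _ hlt (hf n) (hmn ▸ hf m)
  have hpos (i) : 0 < (A i).valuation (1 + coprimeSeq a m) :=
    zero_lt_one.trans_le ((le_max_left _ _).trans (hm i))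
  refine ⟨(1 + coprimeSeq a m)⁻¹,
    inv_ne_zero ((Valuation.pos_iff _).mp (hpos i₀)), fun i => ⟨?_, ?_⟩⟩
  · rw [← ValuationSubring.valuation_le_one_iff, map_inv₀]
    exact inv_le_one_of_one_le₀ ((le_max_left _ _).trans (hm i))
  · rw [← ValuationSubring.valuation_le_one_iff, map_mul, map_inv₀, inv_mul_le_iff₀ (hpos i),
      mul_one]
    exact (le_max_right _ _).trans (hm i)

/-- If `E` is algebraic over `F` and is the fraction field of a subring `R` containing a valuation
ring `A` of `F`, then denominators can be taken in `F`. -/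
theorem exists_algebraMap_mul_mem {F E : Type*} [Field F] [Field E] [Algebra F E]
    [Algebra.IsAlgebraic F E] (A : ValuationSubring F) (R : Subring E)
    (hAR : ∀ a ∈ A, algebraMap F E a ∈ R) {x r s : E} (hr : r ∈ R) (hs : s ∈ R) (hs0 : s ≠ 0)
    (hx : x = r / s) : ∃ c : F, c ≠ 0 ∧ algebraMap F E c * x ∈ R := by
  let R' : Subalgebra A E := { R with algebraMap_mem' := fun a => hAR a a.2 }
  have halg : Algebra.IsAlgebraic A E :=
    (IsFractionRing.comap_isAlgebraic_iff (A := A) (K := F) (C := E)).mpr inferInstance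
  let s' : R' := ⟨s, hs⟩
  have hs' : IsAlgebraic A s' :=
    (isAlgebraic_algebraMap_iff (A := E) Subtype.val_injective).mp (halg.isAlgebraic s)
  obtain ⟨c, hc0, t, hct⟩ := hs'.exists_nonzero_dvd
    (mem_nonZeroDivisors_of_ne_zero fun h => hs0 (congrArg Subtype.val h))
  have hct' : algebraMap F E c = s * t := congrArg Subtype.val hct
  refine ⟨c, fun h => hc0 (Subtype.ext h), ?_⟩
  have : algebraMap F E c * x = t * r := by rw [hct', hx]; field_simp
  rw [this]
  exact R.mul_mem t.2 hr

/-- Proposition 3.4: E = S⁻¹R where R = ⋂ Rᵢ, B = ⋂ O_{vᵢ} and S = B \ {0}. -/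
theorem field_eq_localization_of_intersection
    {F E : Type*} [Field F] [Field E] [Algebra F E] [FiniteDimensional F E]
    (k : ℕ) (O : Fin k → Subring F)
    (hO : ∀ i : Fin k, ∀ a : F, a ≠ 0 → a ∈ O i ∨ a⁻¹ ∈ O i)
    (R : Fin k → Subring E)
    (hfrac : ∀ i : Fin k, ∀ x : E, ∃ r s : E, r ∈ R i ∧ s ∈ R i ∧ s ≠ 0 ∧ x = r / s)
    (hRF : ∀ i : Fin k, ∀ a : F, algebraMap F E a ∈ R i ↔ a ∈ O i) :
    ∀ x : E, ∃ r : E, ∃ b : F, (∀ i : Fin k, r ∈ R i) ∧ (∀ i : Fin k, b ∈ O i) ∧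
      b ≠ 0 ∧ x = r / algebraMap F E b := by
  intro x
  let A (i : Fin k) : ValuationSubring F :=
    { O i with
      mem_or_inv_mem' := fun a => by
        rcases eq_or_ne a 0 with rfl | ha
        · exact Or.inl (O i).zero_mem
        · exact hO i a ha }
  have hc (i : Fin k) : ∃ c : F, c ≠ 0 ∧ algebraMap F E c * x ∈ R i := by
    obtain ⟨r, s, hr, hs, hs0, hx⟩ := hfrac i x
    exact exists_algebraMap_mul_mem (A i) (R i) (fun a ha => (hRF i a).mpr ha) hr hs hs0 hx
  choose c hc0 hcR using hc
  choose d hd0 hd using fun j => exists_mem_and_mul_mem_of_finite A (c j)⁻¹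
  have hb0 : ∏ j, d j ≠ 0 := Finset.prod_ne_zero_iff.mpr fun j _ => hd0 j
  have hb0' : algebraMap F E (∏ j, d j) ≠ 0 := (map_ne_zero _).mpr hb0
  refine ⟨algebraMap F E (∏ j, d j) * x, ∏ j, d j, fun i => ?_,
    fun i => (O i).prod_mem fun j _ => (hd j i).1, hb0, (mul_div_cancel_left₀ x hb0').symm⟩
  have hfactor : ∏ j, d j = (∏ j ∈ Finset.univ.erase i, d j) * (d i * (c i)⁻¹) * c i := by
    rw [← Finset.prod_erase_mul _ _ (Finset.mem_univ i), mul_assoc, mul_assoc,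
      inv_mul_cancel₀ (hc0 i), mul_one]
  rw [hfactor, map_mul, mul_assoc]
  exact (R i).mul_mem ((hRF i _).mpr
    ((O i).mul_mem ((O i).prod_mem fun j _ => (hd j i).1) (hd i i).2)) (hcR i)
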